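/- (Heine's ₂φ₁-to-₂φ₂ transformation) Let 0<q<1, a,b∈ℂ and z∈ℂ with |z|<1, and suppose c and az do not lie in {1,q^{-1},q^{-2},…}. Then ₂φ₁(a,b;c;q,z) = ((az;q)_∞/(z;q)_∞) · ₂φ₂(a, c/b; c, az; q, bz), where for b=0 the quotient c/b is interpreted via the limit (the k-th coefficient (c/b;q)_k b^k z^k being ∏_{j=0}^{k-1}(b - c q^j) · z^k). -/

import Mathlib

/-!
The transformation is obtained by expanding the right-hand side. Since
`(az;q)_∞ / (az;q)_k = (az q^k;q)_∞`, the `q`-binomial theorem (`q_binomial`) gives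
`(az q^k;q)_∞ / (z;q)_∞ = ∑_m (a q^k;q)_m / (q;q)_m z^m`, and `(a;q)_k (a q^k;q)_m = (a;q)_{k+m}`.
The right-hand side is therefore an absolutely convergent double series over `(k, m)`
(`summable_double`). Collecting the terms with `k + m = n`, the coefficient of `(a;q)_n z^n` is
evaluated by the `q`-Chu–Vandermonde sum (`q_vandermonde`)
`∑_k [n,k]_q (-1)^k q^(k choose 2) ∏_{j<k} (b - c q^j) / (c;q)_k = (b;q)_n / (c;q)_n`,
which leaves exactly the `₂φ₁` series.

The `q`-Chu–Vandermonde sum follows by induction on `n` from the `q`-Pascal rule. The `q`-binomial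
theorem follows by iterating the functional equation `(1 - z) f(z) = (1 - a z) f(q z)` and letting
`q^n z` tend to `0`.
-/

noncomputable section

/-- The finite q-shifted factorial `(a;q)_k`. -/
def qp (q a : ℂ) (k : ℕ) : ℂ := ∏ j ∈ Finset.range k, (1 - a * q ^ j)

/-- The infinite q-shifted factorial `(a;q)_∞`. -/
def qpi (q a : ℂ) : ℂ := ∏' j : ℕ, (1 - a * q ^ j)

/-- The basic hypergeometric series `₂φ₁(a,b;c;q,z)`. -/
def phi21 (q a b c z : ℂ) : ℂ :=
  ∑' k : ℕ, qp q a k * qp q b k / (qp q c k * qp q q k) * z ^ k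

open Filter Topology

/-! ### Finite `q`-shifted factorials -/

lemma qp_zero (q a : ℂ) : qp q a 0 = 1 := by simp [qp]

lemma qp_succ (q a : ℂ) (k : ℕ) : qp q a (k + 1) = qp q a k * (1 - a * q ^ k) := by
  simp [qp, Finset.prod_range_succ]

lemma qp_succ' (q a : ℂ) (k : ℕ) : qp q a (k + 1) = (1 - a) * qp q (a * q) k := by
  rw [qp, Finset.prod_range_succ', mul_comm]
  simp [qp, pow_succ', mul_assoc]

lemma qp_add (q a : ℂ) (k m : ℕ) : qp q a (k + m) = qp q a k * qp q (a * q ^ k) m := by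
  simp [qp, Finset.prod_range_add, pow_add, mul_assoc]

lemma qp_ne_zero {q a : ℂ} (ha : ∀ n : ℕ, a * q ^ n ≠ 1) (k : ℕ) : qp q a k ≠ 0 :=
  Finset.prod_ne_zero_iff.2 fun n _ => sub_ne_zero.2 (ha n).symm

lemma mul_pow_ne_one {q z : ℂ} (hq : ‖q‖ < 1) (hz : ‖z‖ < 1) (n : ℕ) : z * q ^ n ≠ 1 := by
  intro h
  have h1 : ‖z‖ * ‖q‖ ^ n = 1 := by simpa using congrArg norm h
  have h2 : ‖q‖ ^ n ≤ 1 := pow_le_one₀ (norm_nonneg _) hq.le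
  nlinarith [norm_nonneg z, norm_nonneg q]

/-! ### Infinite `q`-shifted factorials -/

lemma summable_norm_neg_mul_pow {q : ℂ} (hq : ‖q‖ < 1) (a : ℂ) :
    Summable fun j : ℕ => ‖-(a * q ^ j)‖ := by
  simpa using (summable_geometric_of_lt_one (norm_nonneg q) hq).mul_left ‖a‖

lemma multipliable_qpi {q : ℂ} (hq : ‖q‖ < 1) (a : ℂ) :
    Multipliable fun j : ℕ => 1 - a * q ^ j := by
  simpa [sub_eq_add_neg] using multipliable_one_add_of_summable (summable_norm_neg_mul_pow hq a)

lemma tendsto_qp {q : ℂ} (hq : ‖q‖ < 1) (a : ℂ) :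
    Tendsto (fun n => qp q a n) atTop (𝓝 (qpi q a)) :=
  (multipliable_qpi hq a).hasProd.tendsto_prod_nat

lemma qpi_ne_zero {q a : ℂ} (hq : ‖q‖ < 1) (ha : ∀ n : ℕ, a * q ^ n ≠ 1) : qpi q a ≠ 0 := by
  have := tprod_one_add_ne_zero_of_summable (f := fun j : ℕ => -(a * q ^ j))
    (fun i => by simpa [← sub_eq_add_neg, sub_eq_zero] using (ha i).symm)
    (summable_norm_neg_mul_pow hq a)
  simpa [qpi, sub_eq_add_neg] using this

lemma qpi_eq_mul {q : ℂ} (hq : ‖q‖ < 1) (a : ℂ) (k : ℕ) :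
    qpi q a = qp q a k * qpi q (a * q ^ k) := by
  have h1 : Tendsto (fun n => qp q a (k + n)) atTop (𝓝 (qpi q a)) :=
    (tendsto_qp hq a).comp (tendsto_add_atTop_nat k |>.congr fun n => by rw [add_comm])
  have h2 := (tendsto_qp hq (a * q ^ k)).const_mul (qp q a k)
  exact tendsto_nhds_unique h1 (h2.congr fun n => (qp_add q a k n).symm)

lemma exists_bound_of_tendsto {u : ℕ → ℂ} {x : ℂ} (h : Tendsto u atTop (𝓝 x)) :
    ∃ C : ℝ, 0 ≤ C ∧ ∀ n, ‖u n‖ ≤ C := by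
  obtain ⟨C, hC⟩ := (Metric.isBounded_range_of_tendsto u h).exists_norm_le
  exact ⟨C, (norm_nonneg _).trans (hC (u 0) ⟨0, rfl⟩), fun n => hC _ ⟨n, rfl⟩⟩

lemma exists_bound_qp {q : ℂ} (hq : ‖q‖ < 1) (a : ℂ) : ∃ C : ℝ, 0 ≤ C ∧ ∀ n, ‖qp q a n‖ ≤ C :=
  exists_bound_of_tendsto (tendsto_qp hq a)

lemma exists_bound_qp_inv {q a : ℂ} (hq : ‖q‖ < 1) (ha : ∀ n : ℕ, a * q ^ n ≠ 1) :
    ∃ C : ℝ, 0 ≤ C ∧ ∀ n, ‖(qp q a n)⁻¹‖ ≤ C :=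
  exists_bound_of_tendsto ((tendsto_qp hq a).inv₀ (qpi_ne_zero hq ha))

/-! ### The `q`-binomial theorem -/

/-- A uniform bound for the coefficients of `₁φ₀(a;q,z)`. -/
lemma exists_bound_coeff {q : ℂ} (hq : ‖q‖ < 1) (a : ℂ) :
    ∃ C : ℝ, 0 ≤ C ∧ ∀ n, ‖qp q a n / qp q q n‖ ≤ C := by
  obtain ⟨A, hA0, hA⟩ := exists_bound_qp hq a
  obtain ⟨B, hB0, hB⟩ := exists_bound_qp_inv hq (mul_pow_ne_one hq hq)
  refine ⟨A * B, by positivity, fun n => ?_⟩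
  rw [div_eq_mul_inv, norm_mul]
  exact mul_le_mul (hA n) (hB n) (norm_nonneg _) hA0

lemma summable_phi10 {q : ℂ} (hq : ‖q‖ < 1) (a : ℂ) {z : ℂ} (hz : ‖z‖ < 1) :
    Summable fun n : ℕ => qp q a n / qp q q n * z ^ n := by
  obtain ⟨C, hC0, hC⟩ := exists_bound_coeff hq a
  refine Summable.of_norm_bounded
    ((summable_geometric_of_lt_one (norm_nonneg z) hz).mul_left C) fun n => ?_
  rw [norm_mul, norm_pow]
  exact mul_le_mul_of_nonneg_right (hC n) (by positivity)

/-- The functional equation `(1 - z) f(z) = (1 - a z) f(q z)` of `f(z) = ₁φ₀(a;q,z)`. -/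
lemma phi10_functional {q : ℂ} (hq : ‖q‖ < 1) (a : ℂ) {z : ℂ} (hz : ‖z‖ < 1) :
    (1 - z) * ∑' n : ℕ, qp q a n / qp q q n * z ^ n =
      (1 - a * z) * ∑' n : ℕ, qp q a n / qp q q n * (z * q) ^ n := by
  have hzq : ‖z * q‖ < 1 := by
    rw [norm_mul]; nlinarith [norm_nonneg z, norm_nonneg q]
  have h1 := summable_phi10 hq a hz
  have h2 := summable_phi10 hq a hzq
  have e1 := h1.tsum_eq_zero_add
  have e2 := h2.tsum_eq_zero_add
  have s1 := (summable_nat_add_iff 1).2 h1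
  have s2 := (summable_nat_add_iff 1).2 h2
  have key : (∑' n : ℕ, qp q a (n + 1) / qp q q (n + 1) * z ^ (n + 1))
      - (∑' n : ℕ, qp q a (n + 1) / qp q q (n + 1) * (z * q) ^ (n + 1))
      = z * (∑' n : ℕ, qp q a n / qp q q n * z ^ n)
        - a * z * ∑' n : ℕ, qp q a n / qp q q n * (z * q) ^ n := by
    rw [← s1.tsum_sub s2, ← tsum_mul_left, ← tsum_mul_left,
      ← (h1.mul_left z).tsum_sub (h2.mul_left (a * z))]
    refine tsum_congr fun n => ?_
    have hn : qp q q n ≠ 0 := qp_ne_zero (mul_pow_ne_one hq hq) n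
    have hn1 : 1 - q * q ^ n ≠ 0 := sub_ne_zero.2 (mul_pow_ne_one hq hq n).symm
    rw [qp_succ, qp_succ, mul_pow, mul_pow, pow_succ, pow_succ]
    generalize hD : 1 - q * q ^ n = D at hn1 ⊢
    field_simp
    rw [← hD]
    ring
  simp only [pow_zero, mul_one, qp_zero, div_one] at e1 e2
  linear_combination e1 - e2 + key

lemma phi10_iterate {q : ℂ} (hq : ‖q‖ < 1) (a : ℂ) {z : ℂ} (hz : ‖z‖ < 1) (N : ℕ) :
    qp q z N * ∑' n : ℕ, qp q a n / qp q q n * z ^ n =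
      qp q (a * z) N * ∑' n : ℕ, qp q a n / qp q q n * (z * q ^ N) ^ n := by
  induction N with
  | zero => simp [qp_zero]
  | succ N ih =>
    have hzN : ‖z * q ^ N‖ < 1 := by
      rw [norm_mul, norm_pow]
      have := pow_le_one₀ (n := N) (norm_nonneg q) hq.le
      nlinarith [norm_nonneg z]
    have h := phi10_functional hq a hzN
    rw [qp_succ, qp_succ, pow_succ, ← mul_assoc z]
    linear_combination (1 - z * q ^ N) * ih + qp q (a * z) N * h

/-- The `q`-binomial theorem `₁φ₀(a;q,z) = (az;q)_∞ / (z;q)_∞`. -/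
lemma q_binomial {q : ℂ} (hq : ‖q‖ < 1) (a : ℂ) {z : ℂ} (hz : ‖z‖ < 1) :
    ∑' n : ℕ, qp q a n / qp q q n * z ^ n = qpi q (a * z) / qpi q z := by
  obtain ⟨C, hC0, hC⟩ := exists_bound_coeff hq a
  have hlim : Tendsto (fun N : ℕ => ∑' n : ℕ, qp q a n / qp q q n * (z * q ^ N) ^ n) atTop
      (𝓝 (∑' n : ℕ, qp q a n / qp q q n * (0 : ℂ) ^ n)) := by
    refine tendsto_tsum_of_dominated_convergence
      ((summable_geometric_of_lt_one (norm_nonneg z) hz).mul_left C) (fun n => ?_)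
      (Eventually.of_forall fun N n => ?_)
    · have : Tendsto (fun N : ℕ => z * q ^ N) atTop (𝓝 0) := by
        simpa using (tendsto_pow_atTop_nhds_zero_of_norm_lt_one hq).const_mul z
      exact (this.pow n).const_mul _
    · rw [norm_mul, norm_pow, norm_mul, norm_pow]
      refine mul_le_mul (hC n) (pow_le_pow_left₀ (by positivity) ?_ n) (by positivity) hC0
      exact mul_le_of_le_one_right (norm_nonneg z) (pow_le_one₀ (norm_nonneg q) hq.le)
  have h0 : ∑' n : ℕ, qp q a n / qp q q n * (0 : ℂ) ^ n = 1 := by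
    rw [tsum_eq_single 0 (fun n hn => by simp [hn])]
    simp [qp_zero]
  rw [h0] at hlim
  have hl := (tendsto_qp hq z).mul_const (∑' n : ℕ, qp q a n / qp q q n * z ^ n)
  have hr := (tendsto_qp hq (a * z)).mul hlim
  have := tendsto_nhds_unique hl (hr.congr fun N => (phi10_iterate hq a hz N).symm)
  rw [eq_div_iff (qpi_ne_zero hq (mul_pow_ne_one hq hz))]
  linear_combination this

/-! ### Gaussian binomial coefficients and the `q`-Chu–Vandermonde sum -/

/-- The Gaussian binomial coefficient `[n,k]_q`, defined by the `q`-Pascal rule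
`[n+1,k+1] = [n,k+1] + q^(n-k) [n,k]`. For `k > n` the truncated exponent is harmless because
`[n,k] = 0`. -/
def qbinom (q : ℂ) : ℕ → ℕ → ℂ
  | _, 0 => 1
  | 0, _ + 1 => 0
  | n + 1, k + 1 => qbinom q n (k + 1) + q ^ (n - k) * qbinom q n k

lemma qbinom_zero_right (q : ℂ) (n : ℕ) : qbinom q n 0 = 1 := by
  cases n <;> rfl

lemma qbinom_succ_succ (q : ℂ) (n k : ℕ) :
    qbinom q (n + 1) (k + 1) = qbinom q n (k + 1) + q ^ (n - k) * qbinom q n k := rfl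

lemma qbinom_eq_zero (q : ℂ) (n k : ℕ) (h : n < k) : qbinom q n k = 0 := by
  induction n generalizing k with
  | zero => obtain ⟨k, rfl⟩ := Nat.exists_eq_succ_of_ne_zero h.ne'; rfl
  | succ n ih =>
    obtain ⟨k, rfl⟩ := Nat.exists_eq_succ_of_ne_zero (Nat.ne_zero_of_lt h)
    rw [Nat.succ_eq_add_one, qbinom_succ_succ, ih _ (by omega), ih _ (by omega)]
    simp

lemma qbinom_self (q : ℂ) (n : ℕ) : qbinom q n n = 1 := by
  induction n with
  | zero => rfl
  | succ n ih => rw [qbinom_succ_succ, ih, qbinom_eq_zero _ _ _ (Nat.lt_succ_self n)]; simp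

/-- `[k+m,k]_q (q;q)_k (q;q)_m = (q;q)_{k+m}`. -/
lemma qbinom_mul (q : ℂ) (n k m : ℕ) (h : k + m = n) :
    qbinom q n k * qp q q k * qp q q m = qp q q n := by
  induction n generalizing k m with
  | zero =>
    obtain ⟨rfl, rfl⟩ : k = 0 ∧ m = 0 := by omega
    simp [qbinom_zero_right, qp_zero]
  | succ n ih =>
    rcases k with _ | k
    · obtain rfl : m = n + 1 := by omega
      simp [qbinom_zero_right, qp_zero]
    rcases m with _ | m
    · obtain rfl : k = n := by omega
      simp [qbinom_self, qp_zero]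
    have h1 := ih (k + 1) m (by omega)
    have h2 := ih k (m + 1) (by omega)
    obtain rfl : n = k + m + 1 := by omega
    rw [qbinom_succ_succ, show k + m + 1 - k = m + 1 by omega, qp_succ q q (k + m + 1)]
    rw [qp_succ q q k] at h1 ⊢
    rw [qp_succ q q m] at h2 ⊢
    linear_combination (1 - q * q ^ m) * h1 + q ^ (m + 1) * (1 - q * q ^ k) * h2

/-- The `q`-Chu–Vandermonde sum. By the `q`-Pascal rule the sum `S(n;c)` satisfies
`S(n+1;c) = S(n;c) - q^n (b-c)/(1-c) S(n;cq)`, as does the right-hand side. -/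
lemma q_vandermonde (q b : ℂ) (n : ℕ) (c : ℂ) (hc : ∀ n : ℕ, c * q ^ n ≠ 1) :
    ∑ k ∈ Finset.range (n + 1), qbinom q n k * ((-1) ^ k * q ^ k.choose 2 *
      (∏ j ∈ Finset.range k, (b - c * q ^ j)) / qp q c k) = qp q b n / qp q c n := by
  induction n generalizing c with
  | zero => simp [qbinom_zero_right, qp_zero]
  | succ n ih =>
    have hc' : ∀ n : ℕ, c * q * q ^ n ≠ 1 := fun n => by
      simpa [pow_succ', mul_assoc] using hc (n + 1)
    have h1c : 1 - c ≠ 0 := sub_ne_zero.2 (by simpa using (hc 0).symm)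
    have hn : 1 - c * q ^ n ≠ 0 := sub_ne_zero.2 (hc n).symm
    have I1 := ih c hc
    have I2 := ih (c * q) hc'
    set t : ℕ → ℂ := fun k => (-1) ^ k * q ^ k.choose 2 *
      (∏ j ∈ Finset.range k, (b - c * q ^ j)) / qp q c k with ht
    have hstep : ∀ k ∈ Finset.range (n + 1), q ^ (n - k) * qbinom q n k * t (k + 1) =
        -(q ^ n * (b - c) / (1 - c)) * (qbinom q n k * ((-1) ^ k * q ^ k.choose 2 *
          (∏ j ∈ Finset.range k, (b - c * q * q ^ j)) / qp q (c * q) k)) := by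
      intro k hk
      have hkn : k ≤ n := Nat.lt_succ_iff.1 (Finset.mem_range.1 hk)
      have hp : (∏ j ∈ Finset.range (k + 1), (b - c * q ^ j)) =
          (b - c) * ∏ j ∈ Finset.range k, (b - c * q * q ^ j) := by
        rw [Finset.prod_range_succ', mul_comm]
        simp [pow_succ', mul_assoc]
      have hch : (k + 1).choose 2 = k.choose 2 + k := by
        rw [Nat.choose_succ_succ' k 1, Nat.choose_one_right, add_comm]
      have hpow : q ^ n = q ^ (n - k) * q ^ k := by rw [← pow_add, Nat.sub_add_cancel hkn]
      have hk0 := qp_ne_zero hc' k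
      simp only [ht]
      rw [hp, hch, qp_succ', hpow, pow_add]
      field_simp
      ring
    have hS : ∑ k ∈ Finset.range (n + 1 + 1), qbinom q (n + 1) k * t k =
        (∑ k ∈ Finset.range (n + 1), qbinom q n k * t k) +
          ∑ k ∈ Finset.range (n + 1), q ^ (n - k) * qbinom q n k * t (k + 1) := by
      have e : ∑ k ∈ Finset.range (n + 1), qbinom q n k * t k =
          ∑ k ∈ Finset.range (n + 1 + 1), qbinom q n k * t k := by
        rw [Finset.sum_range_succ _ (n + 1), qbinom_eq_zero _ _ _ (Nat.lt_succ_self n)]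
        simp
      rw [e, Finset.sum_range_succ', Finset.sum_range_succ' _ (n + 1)]
      simp only [qbinom_succ_succ, qbinom_zero_right, add_mul, Finset.sum_add_distrib]
      ring
    have hq1 : (1 - c) * qp q (c * q) n = qp q c n * (1 - c * q ^ n) := by
      rw [← qp_succ', qp_succ]
    have hk1 := qp_ne_zero hc n
    have hk2 := qp_ne_zero hc' n
    rw [hS, Finset.sum_congr rfl hstep, ← Finset.mul_sum, I1, I2, qp_succ q b, qp_succ q c]
    have e2 : -(q ^ n * (b - c) / (1 - c)) * (qp q b n / qp q (c * q) n) =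
        -(q ^ n * (b - c) * qp q b n) / (qp q c n * (1 - c * q ^ n)) := by
      rw [← hq1]; field_simp
    rw [e2]
    generalize hD : 1 - c * q ^ n = D at hn ⊢
    field_simp
    rw [← hD]
    ring

/-! ### The double series -/

lemma summable_phi22_majorant {q : ℂ} (hq : ‖q‖ < 1) (b c z : ℂ) :
    Summable fun k : ℕ => q ^ k.choose 2 * (∏ j ∈ Finset.range k, (b - c * q ^ j)) * z ^ k := by
  -- consecutive terms have ratio `q^k (b - c q^k) z`, which tends to `0`
  have hpow := tendsto_pow_atTop_nhds_zero_of_norm_lt_one hq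
  have hlim : Tendsto (fun k : ℕ => q ^ k * (b - c * q ^ k) * z) atTop (𝓝 0) := by
    simpa using (hpow.mul ((hpow.const_mul c).const_sub b)).mul_const z
  refine summable_of_ratio_norm_eventually_le (r := 1 / 2) (by norm_num) ?_
  have hev : ∀ᶠ k : ℕ in atTop, ‖q ^ k * (b - c * q ^ k) * z‖ < 1 / 2 :=
    (hlim.norm).eventually_lt_const (by simp)
  filter_upwards [hev] with k hk
  have hch : (k + 1).choose 2 = k.choose 2 + k := by
    rw [Nat.choose_succ_succ' k 1, Nat.choose_one_right, add_comm]
  have e : q ^ (k + 1).choose 2 * (∏ j ∈ Finset.range (k + 1), (b - c * q ^ j)) * z ^ (k + 1) =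
      (q ^ k * (b - c * q ^ k) * z) *
        (q ^ k.choose 2 * (∏ j ∈ Finset.range k, (b - c * q ^ j)) * z ^ k) := by
    rw [hch, Finset.prod_range_succ, pow_add, pow_succ]; ring
  rw [e, norm_mul]
  exact mul_le_mul_of_nonneg_right hk.le (norm_nonneg _)

/-- The `(k, m)` term of the double series obtained from the `₂φ₂` side by expanding
`(az q^k;q)_∞ / (z;q)_∞` with the `q`-binomial theorem. -/
def dterm (q a b c z : ℂ) (p : ℕ × ℕ) : ℂ :=
  qp q a (p.1 + p.2) * ((-1) ^ p.1 * (qp q c p.1)⁻¹ * (qp q q p.1)⁻¹ * (qp q q p.2)⁻¹) *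
    ((q ^ p.1.choose 2 * (∏ j ∈ Finset.range p.1, (b - c * q ^ j)) * z ^ p.1) * z ^ p.2)

lemma summable_double {q : ℂ} (hq : ‖q‖ < 1) (a b : ℂ) {c z : ℂ} (hz : ‖z‖ < 1)
    (hc : ∀ n : ℕ, c * q ^ n ≠ 1) : Summable (dterm q a b c z) := by
  obtain ⟨A, hA0, hA⟩ := exists_bound_qp hq a
  obtain ⟨B, hB0, hB⟩ := exists_bound_qp_inv hq (mul_pow_ne_one hq hq)
  obtain ⟨C, hC0, hC⟩ := exists_bound_qp_inv hq hc
  have hz' : Summable fun m : ℕ => ‖z ^ m‖ := by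
    simpa using summable_geometric_of_lt_one (norm_nonneg z) hz
  have hs := summable_mul_of_summable_norm (summable_phi22_majorant hq b c z).norm hz'
  refine Summable.of_norm_bounded (hs.norm.mul_left (A * (C * B * B))) fun p => ?_
  rw [dterm, norm_mul]
  refine mul_le_mul_of_nonneg_right ?_ (norm_nonneg _)
  simp only [norm_mul, norm_pow, norm_neg, norm_one, one_pow, one_mul]
  gcongr
  · exact hA _
  · exact hC _
  · exact hB _
  · exact hB _

/-- Summing the double series over `m` by the `q`-binomial theorem. -/
lemma tsum_dterm_right {q : ℂ} (hq : ‖q‖ < 1) (a b c : ℂ) {z : ℂ} (hz : ‖z‖ < 1)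
    (haz : ∀ n : ℕ, a * z * q ^ n ≠ 1) (k : ℕ) :
    ∑' m : ℕ, dterm q a b c z (k, m) = qpi q (a * z) / qpi q z *
      (qp q a k * (∏ j ∈ Finset.range k, (b - c * q ^ j)) /
        (qp q c k * qp q (a * z) k * qp q q k) * ((-1) ^ k * q ^ (k * (k - 1) / 2)) * z ^ k) := by
  have h := q_binomial hq (a * q ^ k) hz
  have e := qpi_eq_mul hq (a * z) k
  have hk := qp_ne_zero haz k
  have hd : ∀ m : ℕ, dterm q a b c z (k, m) =
      (qp q a k * ((-1) ^ k * (qp q c k)⁻¹ * (qp q q k)⁻¹) *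
        (q ^ k.choose 2 * (∏ j ∈ Finset.range k, (b - c * q ^ j)) * z ^ k)) *
        (qp q (a * q ^ k) m / qp q q m * z ^ m) := fun m => by
    simp only [dterm]
    rw [qp_add, div_eq_mul_inv]; ring
  rw [tsum_congr hd, tsum_mul_left, h, e, Nat.choose_two_right,
    show a * q ^ k * z = a * z * q ^ k by ring]
  simp only [div_eq_mul_inv, mul_inv]
  linear_combination (-(qpi q (a * z * q ^ k) * (qpi q z)⁻¹ * qp q a k *
    (∏ j ∈ Finset.range k, (b - c * q ^ j)) * (qp q c k)⁻¹ * (qp q q k)⁻¹ *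
    (-1) ^ k * q ^ (k * (k - 1) / 2) * z ^ k)) * mul_inv_cancel₀ hk

/-- Summing the double series over the diagonal `k + m = n` by the `q`-Chu–Vandermonde sum. -/
lemma sum_dterm_antidiagonal {q : ℂ} (hq : ‖q‖ < 1) (a b : ℂ) {c : ℂ} (z : ℂ)
    (hc : ∀ n : ℕ, c * q ^ n ≠ 1) (n : ℕ) :
    ∑ p ∈ Finset.HasAntidiagonal.antidiagonal n, dterm q a b c z p =
      qp q a n * qp q b n / (qp q c n * qp q q n) * z ^ n := by
  have hqq := qp_ne_zero (mul_pow_ne_one hq hq)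
  have hV := q_vandermonde q b n c hc
  rw [← Finset.Nat.sum_antidiagonal_eq_sum_range_succ (fun k _ => qbinom q n k *
    ((-1) ^ k * q ^ k.choose 2 * (∏ j ∈ Finset.range k, (b - c * q ^ j)) / qp q c k)) n] at hV
  have e : qp q a n * qp q b n / (qp q c n * qp q q n) * z ^ n =
      (qp q a n / qp q q n * z ^ n) * (qp q b n / qp q c n) := by
    simp only [div_eq_mul_inv, mul_inv]; ring
  rw [e, ← hV, Finset.mul_sum]
  refine Finset.sum_congr rfl fun p hp => ?_
  obtain ⟨k, m⟩ := p
  have hkm : k + m = n := Finset.HasAntidiagonal.mem_antidiagonal.1 hp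
  have hb := qbinom_mul q n k m hkm
  have hb' : qbinom q n k = qp q q n * (qp q q k)⁻¹ * (qp q q m)⁻¹ := by
    rw [← hb]; field_simp [hqq k, hqq m]
  simp only [dterm]
  rw [hkm, hb', ← hkm, pow_add]
  simp only [div_eq_mul_inv]
  linear_combination (-(qp q a (k + m) * z ^ k * z ^ m * (qp q q k)⁻¹ * (qp q q m)⁻¹ *
    (-1) ^ k * q ^ k.choose 2 * (∏ j ∈ Finset.range k, (b - c * q ^ j)) * (qp q c k)⁻¹)) *
    mul_inv_cancel₀ (hqq (k + m))

/-- Heine's `₂φ₁`-to-`₂φ₂` transformation: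
`₂φ₁(a,b;c;q,z) = ((az;q)_∞/(z;q)_∞) ₂φ₂(a, c/b; c, az; q, bz)`,
where the k-th coefficient `(c/b;q)_k b^k` of the `₂φ₂` series is written as
`∏_{j=0}^{k-1} (b - c q^j)`, which also covers the case `b = 0`. -/
theorem stmt5 (q : ℝ) (hq0 : 0 < q) (hq1 : q < 1) (a b c z : ℂ)
    (hz : ‖z‖ < 1)
    (hc : ∀ n : ℕ, c * (q : ℂ) ^ n ≠ 1) (haz : ∀ n : ℕ, a * z * (q : ℂ) ^ n ≠ 1) :
    phi21 (q : ℂ) a b c z =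
      qpi (q : ℂ) (a * z) / qpi (q : ℂ) z *
        ∑' k : ℕ,
          qp (q : ℂ) a k * (∏ j ∈ Finset.range k, (b - c * (q : ℂ) ^ j)) /
              (qp (q : ℂ) c k * qp (q : ℂ) (a * z) k * qp (q : ℂ) (q : ℂ) k) *
            ((-1) ^ k * (q : ℂ) ^ (k * (k - 1) / 2)) * z ^ k := by
  have hq : ‖(q : ℂ)‖ < 1 := by
    rw [Complex.norm_real, Real.norm_of_nonneg hq0.le]; exact hq1
  have hs := summable_double hq a b hz hc
  rw [← tsum_mul_left]
  calc phi21 (q : ℂ) a b c z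
      = ∑' n : ℕ, ∑ p ∈ Finset.HasAntidiagonal.antidiagonal n, dterm q a b c z p :=
        tsum_congr fun n => (sum_dterm_antidiagonal hq a b z hc n).symm
    _ = ∑' p : ℕ × ℕ, dterm q a b c z p := by
        have hs' := Finset.HasAntidiagonal.sigmaAntidiagonalEquivProd.summable_iff.2 hs
        rw [← Finset.HasAntidiagonal.sigmaAntidiagonalEquivProd.tsum_eq (dterm (q : ℂ) a b c z)]
        refine Eq.trans (tsum_congr fun n => ?_)
          (hs'.tsum_sigma' fun n => (hasSum_fintype _).summable).symm
        rw [tsum_fintype, ← Finset.sum_coe_sort]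
        rfl
    _ = ∑' k : ℕ, ∑' m : ℕ, dterm q a b c z (k, m) := hs.tsum_prod
    _ = _ := tsum_congr fun k => tsum_dterm_right hq a b c hz haz k
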